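/- arXiv:1301.0699 — 3 statements merged into one kernel-verified Lean document; each statement's English description precedes it below -/
import Mathlib

section
/- Let p, q > 1 and a ≥ 1. Then tan_{p,q} is (a,a)-convex on (0,1): for all r, s ∈ (0,1), tan_{p,q}(((r^a + s^a)/2)^{1/a}) ≤ ((tan_{p,q}(r)^a + tan_{p,q}(s)^a)/2)^{1/a}. -/
open Real Set

/-- `arcsinPQ p q x = ∫₀ˣ (1 - tᵠ)^(-1/p) dt`, the generalized inverse sine. -/
noncomputable def arcsinPQ (p q x : ℝ) : ℝ := ∫ t in (0:ℝ)..x, (1 - t ^ q) ^ (-(1/p))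

/-- `sinPQ p q` is the inverse function of `arcsinPQ p q` (restricted to `[0,1]`). -/
noncomputable def sinPQ (p q : ℝ) : ℝ → ℝ := Function.invFunOn (arcsinPQ p q) (Set.Icc 0 1)

/-- `cosPQ p q x = (1 - sinPQ p q x ^ q)^(1/p)`. -/
noncomputable def cosPQ (p q x : ℝ) : ℝ := (1 - sinPQ p q x ^ q) ^ (1/p)

/-- `tanPQ p q x = sinPQ p q x / cosPQ p q x`. -/
noncomputable def tanPQ (p q x : ℝ) : ℝ := sinPQ p q x / cosPQ p q x

/-- Minkowski's inequality for the power mean of two numbers and a constant shift. -/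
lemma powerMean_add_const_le {a : ℝ} (ha : 1 ≤ a) {x y c : ℝ} (hx : 0 ≤ x) (hy : 0 ≤ y)
    (hc : 0 ≤ c) :
    (((x + c) ^ a + (y + c) ^ a) / 2) ^ (1 / a) ≤ ((x ^ a + y ^ a) / 2) ^ (1 / a) + c := by
  have ha0 : a ≠ 0 := by positivity
  have h := Real.Lp_add_le_of_nonneg (s := Finset.univ) (f := ![x, y]) (g := ![c, c]) ha
    (by intro i _; fin_cases i <;> simpa) (by intro i _; fin_cases i <;> simpa)
  simp only [Fin.sum_univ_two, Matrix.cons_val_zero, Matrix.cons_val_one] at h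
  have h2 : (0 : ℝ) < 2 ^ (1 / a) := by positivity
  have hcc : (c ^ a + c ^ a) ^ (1 / a) = 2 ^ (1 / a) * c := by
    rw [← two_mul, Real.mul_rpow (by norm_num) (by positivity), ← Real.rpow_mul hc,
      mul_one_div_cancel ha0, Real.rpow_one]
  rw [hcc] at h
  rw [Real.div_rpow (by positivity) (by norm_num), Real.div_rpow (by positivity) (by norm_num),
    div_add' _ _ _ h2.ne', div_le_div_iff_of_pos_right h2, mul_comm c]
  exact h

/-- The power mean is positively homogeneous. -/
lemma powerMean_const_mul {a : ℝ} (ha : a ≠ 0) {x y k : ℝ} (hx : 0 ≤ x) (hy : 0 ≤ y)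
    (hk : 0 ≤ k) :
    (((k * x) ^ a + (k * y) ^ a) / 2) ^ (1 / a) = k * ((x ^ a + y ^ a) / 2) ^ (1 / a) := by
  rw [Real.mul_rpow hk hx, Real.mul_rpow hk hy, ← mul_add, mul_div_assoc,
    Real.mul_rpow (by positivity) (by positivity), ← Real.rpow_mul hk, mul_one_div_cancel ha,
    Real.rpow_one]

lemma powerMean_mem_Ioo {a : ℝ} (ha : 0 < a) {r s : ℝ} (hr : r ∈ Ioo (0 : ℝ) 1)
    (hs : s ∈ Ioo (0 : ℝ) 1) : ((r ^ a + s ^ a) / 2) ^ (1 / a) ∈ Ioo (0 : ℝ) 1 := by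
  have h1 := Real.rpow_pos_of_pos hr.1 a
  have h2 := Real.rpow_pos_of_pos hs.1 a
  have h3 := Real.rpow_lt_one hr.1.le hr.2 ha
  have h4 := Real.rpow_lt_one hs.1.le hs.2 ha
  exact ⟨by positivity, Real.rpow_lt_one (by positivity) (by linarith) (by positivity)⟩

section ArcsinPQ

variable {p q : ℝ}

lemma one_sub_rpow_pos (hq : 0 < q) {t : ℝ} (ht : t ∈ Ico (0 : ℝ) 1) : 0 < 1 - t ^ q :=
  sub_pos.2 (Real.rpow_lt_one ht.1 ht.2 hq)

lemma continuousAt_arcsinPQ_integrand (hq : 0 < q) {t : ℝ} (ht : t ∈ Ico (0 : ℝ) 1) :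
    ContinuousAt (fun t : ℝ => (1 - t ^ q) ^ (-(1 / p))) t :=
  (continuousAt_const.sub (Real.continuousAt_rpow_const _ _ (Or.inr hq.le))).rpow_const
    (Or.inl (one_sub_rpow_pos hq ht).ne')

lemma intervalIntegrable_arcsinPQ_integrand (hq : 0 < q) {u : ℝ} (hu : u ∈ Ico (0 : ℝ) 1) :
    IntervalIntegrable (fun t : ℝ => (1 - t ^ q) ^ (-(1 / p))) MeasureTheory.volume 0 u := by
  refine ContinuousOn.intervalIntegrable fun t ht => ?_
  rw [uIcc_of_le hu.1] at ht
  exact (continuousAt_arcsinPQ_integrand hq ⟨ht.1, ht.2.trans_lt hu.2⟩).continuousWithinAt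

lemma hasDerivAt_arcsinPQ (hq : 0 < q) {u : ℝ} (hu : u ∈ Ico (0 : ℝ) 1) :
    HasDerivAt (arcsinPQ p q) ((1 - u ^ q) ^ (-(1 / p))) u := by
  refine intervalIntegral.integral_hasDerivAt_right
    (intervalIntegrable_arcsinPQ_integrand hq hu) ?_ (continuousAt_arcsinPQ_integrand hq hu)
  exact (Measurable.stronglyMeasurable (by fun_prop)).stronglyMeasurableAtFilter

lemma le_arcsinPQ (hp : 0 < p) (hq : 0 < q) {u : ℝ} (hu : u ∈ Icc (0 : ℝ) 1)
    (hi : IntervalIntegrable (fun t : ℝ => (1 - t ^ q) ^ (-(1 / p))) MeasureTheory.volume 0 u) :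
    u ≤ arcsinPQ p q u := by
  have h := intervalIntegral.integral_mono_on_of_le_Ioo (f := fun _ => (1 : ℝ)) hu.1
    (by simp) hi fun t ht =>
      Real.one_le_rpow_of_pos_of_le_one_of_nonpos
        (one_sub_rpow_pos hq ⟨ht.1.le, ht.2.trans_le hu.2⟩)
        (sub_le_self _ (Real.rpow_nonneg ht.1.le q)) (by simp [hp.le])
  simpa [arcsinPQ] using h

lemma sinPQ_mem_Ico_and_arcsinPQ_sinPQ (hp : 0 < p) (hq : 0 < q) {x : ℝ}
    (hx : x ∈ Ioo (0 : ℝ) 1) :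
    sinPQ p q x ∈ Ico (0 : ℝ) 1 ∧ arcsinPQ p q (sinPQ p q x) = x := by
  have hcont : ContinuousOn (arcsinPQ p q) (Icc 0 x) := fun t ht =>
    (hasDerivAt_arcsinPQ hq ⟨ht.1, ht.2.trans_lt hx.2⟩).continuousAt.continuousWithinAt
  have hx' : x ∈ Ico (0 : ℝ) 1 := ⟨hx.1.le, hx.2⟩
  obtain ⟨u, hu, hux⟩ := intermediate_value_Icc hx.1.le hcont
    (show x ∈ Icc (arcsinPQ p q 0) (arcsinPQ p q x) from
      ⟨by simpa [arcsinPQ] using hx.1.le,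
        le_arcsinPQ hp hq ⟨hx.1.le, hx.2.le⟩ (intervalIntegrable_arcsinPQ_integrand hq hx')⟩)
  have hex : ∃ u ∈ Icc (0 : ℝ) 1, arcsinPQ p q u = x := ⟨u, ⟨hu.1, hu.2.trans hx.2.le⟩, hux⟩
  have hmem : sinPQ p q x ∈ Icc (0 : ℝ) 1 := Function.invFunOn_mem hex
  have heq : arcsinPQ p q (sinPQ p q x) = x := Function.invFunOn_eq hex
  refine ⟨⟨hmem.1, hmem.2.lt_of_ne fun h1 => ?_⟩, heq⟩
  rw [h1] at heq
  by_cases hi : IntervalIntegrable (fun t : ℝ => (1 - t ^ q) ^ (-(1 / p)))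
      MeasureTheory.volume 0 1
  · have := le_arcsinPQ hp hq (by simp) hi
    linarith [hx.2]
  · rw [arcsinPQ, intervalIntegral.integral_undef hi] at heq
    exact hx.1.ne heq

/-- The slope of `tanPQ p q`, as a function of `u = sinPQ p q x`. -/
noncomputable def tanPQSlope (p q u : ℝ) : ℝ := 1 + q / p * (u ^ q / (1 - u ^ q))

lemma tanPQSlope_mono (hp : 0 < p) (hq : 0 < q) {u v : ℝ} (hu : 0 ≤ u) (huv : u ≤ v)
    (hv : v < 1) : tanPQSlope p q u ≤ tanPQSlope p q v := by
  have h1 : 0 < 1 - v ^ q := one_sub_rpow_pos hq ⟨hu.trans huv, hv⟩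
  have h2 : u ^ q ≤ v ^ q := Real.rpow_le_rpow hu huv hq.le
  have h3 : 0 ≤ v ^ q := Real.rpow_nonneg (hu.trans huv) q
  unfold tanPQSlope
  gcongr

lemma tanPQSlope_nonneg (hp : 0 < p) (hq : 0 < q) {u : ℝ} (hu : u ∈ Ico (0 : ℝ) 1) :
    0 ≤ tanPQSlope p q u := by
  have h1 := one_sub_rpow_pos hq hu
  have h3 : 0 ≤ u ^ q := Real.rpow_nonneg hu.1 q
  unfold tanPQSlope
  positivity

lemma hasDerivAt_div_one_sub_rpow (hq : 0 < q) {u : ℝ} (hu : u ∈ Ioo (0 : ℝ) 1) :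
    HasDerivAt (fun u : ℝ => u / (1 - u ^ q) ^ (1 / p))
      (tanPQSlope p q u * (1 - u ^ q) ^ (-(1 / p))) u := by
  have h1 := one_sub_rpow_pos hq ⟨hu.1.le, hu.2⟩
  have hd : HasDerivAt (fun u : ℝ => 1 - u ^ q) (-(q * u ^ (q - 1))) u :=
    (Real.hasDerivAt_rpow_const (Or.inl hu.1.ne')).const_sub 1
  have hd2 := (hasDerivAt_id u).div (hd.rpow_const (p := 1 / p) (Or.inl h1.ne'))
    (Real.rpow_pos_of_pos h1 _).ne'
  refine hd2.congr_deriv ?_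
  have hpos := Real.rpow_pos_of_pos h1 (1 / p)
  rw [Real.rpow_neg h1.le, Real.rpow_sub_one h1.ne', Real.rpow_sub_one hu.1.ne', tanPQSlope]
  have := hu.1.ne'
  have := h1.ne'
  have := hpos.ne'
  simp only [id]
  generalize (1 - u ^ q) ^ (1 / p) = w at *
  field_simp
  ring

/-- The curve `(arcsinPQ p q u, u / (1 - u ^ q) ^ (1 / p))`, which is the graph of `tanPQ p q`, lies
above each of its tangents. -/
lemma tangent_le_div_one_sub_rpow (hp : 0 < p) (hq : 0 < q) {u v : ℝ} (hu : u ∈ Ico (0 : ℝ) 1)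
    (hv : v ∈ Ico (0 : ℝ) 1) :
    v / (1 - v ^ q) ^ (1 / p) - tanPQSlope p q v * arcsinPQ p q v ≤
      u / (1 - u ^ q) ^ (1 / p) - tanPQSlope p q v * arcsinPQ p q u := by
  set φ : ℝ → ℝ := fun u => u / (1 - u ^ q) ^ (1 / p) - tanPQSlope p q v * arcsinPQ p q u
  have hcont : ContinuousOn φ (Ico 0 1) := fun t ht => by
    have h1 := one_sub_rpow_pos hq ht
    refine ContinuousAt.continuousWithinAt (ContinuousAt.sub (ContinuousAt.div continuousAt_id ?_
      (Real.rpow_pos_of_pos h1 _).ne')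
      (continuousAt_const.mul (hasDerivAt_arcsinPQ hq ht).continuousAt))
    exact (continuousAt_const.sub (Real.continuousAt_rpow_const _ _ (Or.inr hq.le))).rpow_const
      (Or.inl h1.ne')
  have hder : ∀ t ∈ Ioo (0 : ℝ) 1, HasDerivAt φ
      ((tanPQSlope p q t - tanPQSlope p q v) * (1 - t ^ q) ^ (-(1 / p))) t := fun t ht =>
    ((hasDerivAt_div_one_sub_rpow hq ht).sub
      ((hasDerivAt_arcsinPQ hq ⟨ht.1.le, ht.2⟩).const_mul _)).congr_deriv (by ring)
  have hpow : ∀ t ∈ Ioo (0 : ℝ) 1, 0 ≤ (1 - t ^ q) ^ (-(1 / p)) := fun t ht =>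
    Real.rpow_nonneg (one_sub_rpow_pos hq ⟨ht.1.le, ht.2⟩).le _
  change φ v ≤ φ u
  rcases le_total u v with huv | hvu
  · have hsub : ∀ t ∈ interior (Icc u v), t ∈ Ioo (0 : ℝ) 1 ∧ t < v := fun t ht => by
      rw [interior_Icc] at ht
      exact ⟨⟨hu.1.trans_lt ht.1, ht.2.trans hv.2⟩, ht.2⟩
    refine antitoneOn_of_deriv_nonpos (convex_Icc u v)
      (hcont.mono fun t ht => ⟨hu.1.trans ht.1, ht.2.trans_lt hv.2⟩)
      (fun t ht => (hder t (hsub t ht).1).differentiableAt.differentiableWithinAt)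
      (fun t ht => ?_) (left_mem_Icc.2 huv) (right_mem_Icc.2 huv) huv
    obtain ⟨ht, htv⟩ := hsub t ht
    rw [(hder t ht).deriv]
    exact mul_nonpos_of_nonpos_of_nonneg
      (sub_nonpos.2 (tanPQSlope_mono hp hq ht.1.le htv.le hv.2)) (hpow t ht)
  · have hsub : ∀ t ∈ interior (Icc v u), t ∈ Ioo (0 : ℝ) 1 ∧ v < t := fun t ht => by
      rw [interior_Icc] at ht
      exact ⟨⟨hv.1.trans_lt ht.1, ht.2.trans hu.2⟩, ht.1⟩
    refine monotoneOn_of_deriv_nonneg (convex_Icc v u)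
      (hcont.mono fun t ht => ⟨hv.1.trans ht.1, ht.2.trans_lt hu.2⟩)
      (fun t ht => (hder t (hsub t ht).1).differentiableAt.differentiableWithinAt)
      (fun t ht => ?_) (left_mem_Icc.2 hvu) (right_mem_Icc.2 hvu) hvu
    obtain ⟨ht, htv⟩ := hsub t ht
    rw [(hder t ht).deriv]
    exact mul_nonneg (sub_nonneg.2 (tanPQSlope_mono hp hq hv.1 htv.le ht.2)) (hpow t ht)

/-- Each tangent to the graph of `tanPQ p q` over `(0, 1)` supports the graph from below, and has
nonnegative slope and nonpositive value at the origin. -/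
lemma exists_tangent_tanPQ (hp : 0 < p) (hq : 0 < q) {m : ℝ} (hm : m ∈ Ioo (0 : ℝ) 1) :
    ∃ k c : ℝ, 0 ≤ k ∧ 0 ≤ c ∧ tanPQ p q m = k * m - c ∧
      ∀ x ∈ Ioo (0 : ℝ) 1, k * x ≤ tanPQ p q x + c := by
  obtain ⟨hv, hvm⟩ := sinPQ_mem_Ico_and_arcsinPQ_sinPQ hp hq hm
  refine ⟨tanPQSlope p q (sinPQ p q m), tanPQSlope p q (sinPQ p q m) * m - tanPQ p q m,
    tanPQSlope_nonneg hp hq hv, ?_, by ring, fun x hx => ?_⟩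
  · have h := tangent_le_div_one_sub_rpow hp hq (u := 0) (by simp) hv
    have h0 : arcsinPQ p q 0 = 0 := by simp [arcsinPQ]
    rw [hvm, h0, zero_div, mul_zero, sub_zero] at h
    rw [tanPQ, cosPQ]
    linarith
  · obtain ⟨hu, hux⟩ := sinPQ_mem_Ico_and_arcsinPQ_sinPQ hp hq hx
    have h := tangent_le_div_one_sub_rpow hp hq hu hv
    rw [hvm, hux] at h
    simp only [tanPQ, cosPQ]
    linarith

lemma tanPQ_nonneg (hp : 0 < p) (hq : 0 < q) {x : ℝ} (hx : x ∈ Ioo (0 : ℝ) 1) :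
    0 ≤ tanPQ p q x := by
  have hu := (sinPQ_mem_Ico_and_arcsinPQ_sinPQ hp hq hx).1
  exact div_nonneg hu.1 (Real.rpow_nonneg (one_sub_rpow_pos hq hu).le _)

end ArcsinPQ

theorem tanPQ_aa_convex (p q a : ℝ) (hp : 1 < p) (hq : 1 < q) (ha : 1 ≤ a)
    (r s : ℝ) (hr : r ∈ Set.Ioo (0:ℝ) 1) (hs : s ∈ Set.Ioo (0:ℝ) 1) :
    tanPQ p q (((r ^ a + s ^ a) / 2) ^ (1/a)) ≤
      ((tanPQ p q r ^ a + tanPQ p q s ^ a) / 2) ^ (1/a) := by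
  have hp0 : 0 < p := by linarith
  have hq0 : 0 < q := by linarith
  have ha0 : 0 < a := by linarith
  obtain ⟨k, c, hk, hc, hm, hle⟩ := exists_tangent_tanPQ hp0 hq0 (powerMean_mem_Ioo ha0 hr hs)
  rw [hm, sub_le_iff_le_add, ← powerMean_const_mul ha0.ne' hr.1.le hs.1.le hk]
  refine le_trans ?_
    (powerMean_add_const_le ha (tanPQ_nonneg hp0 hq0 hr) (tanPQ_nonneg hp0 hq0 hs) hc)
  have h1 := mul_nonneg hk hr.1.le
  have h2 := mul_nonneg hk hs.1.le
  have h3 := hle r hr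
  have h4 := hle s hs
  gcongr
end

section
/- Let p, q > 1, a ≥ 1 and b ≤ a. Then arsinh_{p,q} is (a,b)-concave on (0,∞): for all r, s > 0, arsinh_{p,q}(((r^a + s^a)/2)^{1/a}) ≥ M_b(arsinh_{p,q}(r), arsinh_{p,q}(s)). -/
open Real Set

/-- `arsinhPQ p q x = ∫₀ˣ (1 + tᵠ)^(-1/p) dt`, the generalized inverse hyperbolic sine. -/
noncomputable def arsinhPQ (p q x : ℝ) : ℝ := ∫ t in (0:ℝ)..x, (1 + t ^ q) ^ (-(1/p))

/-- The power mean `M_a(x,y)`: `((x^a + y^a)/2)^(1/a)` for `a ≠ 0` and `√(xy)` for `a = 0`. -/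
noncomputable def powerMean (a x y : ℝ) : ℝ :=
  if a = 0 then Real.sqrt (x * y) else ((x ^ a + y ^ a) / 2) ^ (1/a)

lemma antitoneOn_arsinhPQ_integrand {p q : ℝ} (hp : 0 < p) (hq : 0 ≤ q) :
    AntitoneOn (fun t : ℝ => (1 + t ^ q) ^ (-(1/p))) (Ici 0) := by
  intro x hx y hy hxy
  have hx0 : (0:ℝ) ≤ x := hx
  have h1 : 0 ≤ x ^ q := rpow_nonneg hx0 q
  have h2 : x ^ q ≤ y ^ q := rpow_le_rpow hx0 hxy hq
  have h3 : -(1/p) ≤ 0 := by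
    have : 0 < 1 / p := by positivity
    linarith
  exact rpow_le_rpow_of_nonpos (by linarith) (by linarith) h3

lemma intervalIntegrable_arsinhPQ_integrand {p q x y : ℝ} (hp : 0 < p) (hq : 0 ≤ q)
    (hx : 0 ≤ x) (hy : 0 ≤ y) :
    IntervalIntegrable (fun t : ℝ => (1 + t ^ q) ^ (-(1/p))) MeasureTheory.volume x y :=
  ((antitoneOn_arsinhPQ_integrand hp hq).mono
    (fun _ ht => le_trans (le_min hx hy) ht.1)).intervalIntegrable

lemma arsinhPQ_sub {p q x y : ℝ} (hp : 0 < p) (hq : 0 ≤ q) (hx : 0 ≤ x) (hy : 0 ≤ y) :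
    arsinhPQ p q y - arsinhPQ p q x = ∫ t in x..y, (1 + t ^ q) ^ (-(1/p)) :=
  intervalIntegral.integral_interval_sub_left
    (intervalIntegrable_arsinhPQ_integrand hp hq le_rfl hy)
    (intervalIntegrable_arsinhPQ_integrand hp hq le_rfl hx)

lemma arsinhPQ_zero (p q : ℝ) : arsinhPQ p q 0 = 0 := by simp [arsinhPQ]

/-- The graph of `arsinhPQ p q` lies below each of its tangent lines. -/
lemma arsinhPQ_le_tangent {p q m x : ℝ} (hp : 0 < p) (hq : 0 ≤ q) (hm : 0 ≤ m) (hx : 0 ≤ x) :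
    arsinhPQ p q x ≤ arsinhPQ p q m + (1 + m ^ q) ^ (-(1/p)) * (x - m) := by
  rcases le_total m x with h | h
  · have h1 := arsinhPQ_sub hp hq hm hx
    have h2 := intervalIntegral.integral_mono_on h
      (intervalIntegrable_arsinhPQ_integrand hp hq hm hx)
      (intervalIntegrable_const (c := (1 + m ^ q) ^ (-(1/p))))
      (fun t ht => antitoneOn_arsinhPQ_integrand hp hq hm (hm.trans ht.1) ht.1)
    rw [intervalIntegral.integral_const, smul_eq_mul] at h2
    linarith
  · have h1 := arsinhPQ_sub hp hq hx hm
    have h2 := intervalIntegral.integral_mono_on h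
      (intervalIntegrable_const (c := (1 + m ^ q) ^ (-(1/p))))
      (intervalIntegrable_arsinhPQ_integrand hp hq hx hm)
      (fun t ht => antitoneOn_arsinhPQ_integrand hp hq (hx.trans ht.1) hm ht.2)
    rw [intervalIntegral.integral_const, smul_eq_mul] at h2
    linarith

lemma arsinhPQ_pos {p q x : ℝ} (hp : 0 < p) (hq : 0 ≤ q) (hx : 0 < x) : 0 < arsinhPQ p q x := by
  have h := arsinhPQ_le_tangent hp hq hx.le le_rfl
  rw [arsinhPQ_zero] at h
  have : 0 < (1 + x ^ q) ^ (-(1/p)) * x := by positivity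
  linarith

/-- Minkowski's inequality for the power mean of an affine function with nonnegative
coefficients. -/
lemma powerMean_affine_le {a c d r s : ℝ} (ha : 1 ≤ a) (hc : 0 ≤ c) (hd : 0 ≤ d)
    (hr : 0 ≤ r) (hs : 0 ≤ s) :
    powerMean a (c + d * r) (c + d * s) ≤ c + d * powerMean a r s := by
  have ha0 : 0 < a := by linarith
  have h := Real.Lp_add_le_of_nonneg (s := Finset.univ) (p := a) (f := fun _ : Fin 2 => c)
    (g := ![d * r, d * s]) ha (fun _ _ => hc)
    (fun i _ => by fin_cases i <;> simp <;> positivity)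
  simp only [Fin.sum_univ_two, Matrix.cons_val_zero, Matrix.cons_val_one] at h
  have h2 : (0:ℝ) < 2 ^ (1 / a) := by positivity
  have hcc : (c ^ a + c ^ a) ^ (1 / a) = c * 2 ^ (1 / a) := by
    rw [← mul_two, mul_rpow (by positivity) (by norm_num), one_div, rpow_rpow_inv hc ha0.ne']
  have hdd : ((d * r) ^ a + (d * s) ^ a) ^ (1 / a) = d * (r ^ a + s ^ a) ^ (1 / a) := by
    rw [mul_rpow hd hr, mul_rpow hd hs, ← mul_add, mul_rpow (by positivity) (by positivity),
      one_div, rpow_rpow_inv hd ha0.ne']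
  rw [hcc, hdd] at h
  simp only [powerMean, if_neg ha0.ne']
  rw [div_rpow (by positivity) (by norm_num), div_rpow (by positivity) (by norm_num),
    div_le_iff₀ h2]
  refine h.trans_eq ?_
  field_simp

lemma powerMean_mono {a x y x' y' : ℝ} (ha : 0 < a) (hx : 0 ≤ x) (hy : 0 ≤ y)
    (hxx : x ≤ x') (hyy : y ≤ y') : powerMean a x y ≤ powerMean a x' y' := by
  simp only [powerMean, if_neg ha.ne']
  gcongr

lemma sqrt_mul_rpow_le {x y : ℝ} (b : ℝ) (hx : 0 < x) (hy : 0 < y) :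
    √(x * y) ^ b ≤ (x ^ b + y ^ b) / 2 := by
  have h : √(x * y) ^ b = √(x ^ b * y ^ b) := by
    rw [sqrt_eq_rpow, sqrt_eq_rpow, ← mul_rpow hx.le hy.le, ← rpow_mul (by positivity),
      ← rpow_mul (by positivity), mul_comm b]
  rw [h]
  refine Real.sqrt_le_iff.mpr ⟨by positivity, ?_⟩
  nlinarith [sq_nonneg (x ^ b - y ^ b)]

lemma sqrt_mul_le_powerMean {a x y : ℝ} (ha : 0 < a) (hx : 0 < x) (hy : 0 < y) :
    √(x * y) ≤ powerMean a x y := by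
  rw [powerMean, if_neg ha.ne', one_div, le_rpow_inv_iff_of_pos (by positivity) (by positivity) ha]
  exact sqrt_mul_rpow_le a hx hy

lemma powerMean_le_powerMean {a b x y : ℝ} (ha : 0 < a) (hb : b ≤ a) (hx : 0 < x) (hy : 0 < y) :
    powerMean b x y ≤ powerMean a x y := by
  rcases lt_trichotomy b 0 with h | h | h
  · refine le_trans ?_ (sqrt_mul_le_powerMean ha hx hy)
    rw [powerMean, if_neg h.ne, one_div,
      rpow_inv_le_iff_of_neg (by positivity) (by positivity) h]
    exact sqrt_mul_rpow_le b hx hy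
  · rw [h, powerMean, if_pos rfl]
    exact sqrt_mul_le_powerMean ha hx hy
  · have hj := (convexOn_rpow ((one_le_div h).mpr hb)).2 (mem_Ici.mpr (rpow_nonneg hx.le b))
      (mem_Ici.mpr (rpow_nonneg hy.le b))
      (show (0:ℝ) ≤ 1/2 by norm_num) (show (0:ℝ) ≤ 1/2 by norm_num) (by norm_num)
    simp only [smul_eq_mul, ← rpow_mul hx.le, ← rpow_mul hy.le, mul_div_cancel₀ _ h.ne'] at hj
    rw [powerMean, powerMean, if_neg h.ne', if_neg ha.ne', one_div a,
      le_rpow_inv_iff_of_pos (by positivity) (by positivity) ha, ← rpow_mul (by positivity)]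
    calc ((x ^ b + y ^ b) / 2) ^ (1 / b * a)
        = (1 / 2 * x ^ b + 1 / 2 * y ^ b) ^ (a / b) := by congr 1 <;> ring
      _ ≤ (x ^ a + y ^ a) / 2 := by linarith

theorem arsinhPQ_ab_concave_one_le (p q a b : ℝ) (hp : 1 < p) (hq : 1 < q)
    (ha : 1 ≤ a) (hb : b ≤ a)
    (r s : ℝ) (hr : 0 < r) (hs : 0 < s) :
    arsinhPQ p q (((r ^ a + s ^ a) / 2) ^ (1/a)) ≥
      powerMean b (arsinhPQ p q r) (arsinhPQ p q s) := by
  have ha0 : 0 < a := by linarith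
  have hp0 : 0 < p := by linarith
  have hq0 : 0 ≤ q := by linarith
  have hM : powerMean a r s = ((r ^ a + s ^ a) / 2) ^ (1/a) := if_neg ha0.ne'
  rw [← hM]
  have hm : 0 ≤ powerMean a r s := by rw [hM]; positivity
  set m := powerMean a r s
  set d := (1 + m ^ q) ^ (-(1/p))
  have hd0 : 0 ≤ d := by positivity
  have hc0 : 0 ≤ arsinhPQ p q m - d * m := by
    have h := arsinhPQ_le_tangent hp0 hq0 hm le_rfl
    rw [arsinhPQ_zero] at h
    linarith
  have key {x : ℝ} (hx : 0 < x) : arsinhPQ p q x ≤ (arsinhPQ p q m - d * m) + d * x := by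
    have h := arsinhPQ_le_tangent hp0 hq0 hm hx.le
    linarith
  have hfr := arsinhPQ_pos hp0 hq0 hr
  have hfs := arsinhPQ_pos hp0 hq0 hs
  calc powerMean b (arsinhPQ p q r) (arsinhPQ p q s)
      ≤ powerMean a (arsinhPQ p q r) (arsinhPQ p q s) := powerMean_le_powerMean ha0 hb hfr hfs
    _ ≤ _ := powerMean_mono ha0 hfr.le hfs.le (key hr) (key hs)
    _ ≤ (arsinhPQ p q m - d * m) + d * m := powerMean_affine_le ha hc0 hd0 hr.le hs.le
    _ = arsinhPQ p q m := by ring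
end

section
/- Let p, q > 1 and a ≥ 0. Then the function x ↦ (sin_{p,q}(x)/x)^a · (1 - sin_{p,q}(x)^q)^{1/p} is decreasing on (0,1). -/
open Real Set

theorem arcsinPQ_integrand_monotoneOn {p q : ℝ} (hp : 0 < p) (hq : 0 < q) :
    MonotoneOn (fun t : ℝ => (1 - t ^ q) ^ (-(1/p))) (Ico 0 1) := by
  intro s hs t ht hst
  have h₁ : s ^ q ≤ t ^ q := rpow_le_rpow hs.1 hst hq.le
  have h₂ : t ^ q < 1 := rpow_lt_one ht.1 ht.2 hq
  exact rpow_le_rpow_of_nonpos (by linarith) (by linarith)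
    (neg_nonpos.2 (one_div_pos.2 hp).le)

theorem one_le_arcsinPQ_integrand {p q t : ℝ} (hp : 0 < p) (hq : 0 < q) (ht : t ∈ Ico (0:ℝ) 1) :
    1 ≤ (1 - t ^ q) ^ (-(1/p)) := by
  simpa [zero_rpow hq.ne'] using
    arcsinPQ_integrand_monotoneOn hp hq (by simp : (0:ℝ) ∈ Ico (0:ℝ) 1) ht ht.1

theorem arcsinPQ_integrand_intervalIntegrable {p q s t : ℝ} (hp : 0 < p) (hq : 0 < q)
    (hs : 0 ≤ s) (hst : s ≤ t) (ht : t < 1) :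
    IntervalIntegrable (fun t : ℝ => (1 - t ^ q) ^ (-(1/p))) MeasureTheory.volume s t := by
  apply MonotoneOn.intervalIntegrable
  rw [uIcc_of_le hst]
  exact (arcsinPQ_integrand_monotoneOn hp hq).mono fun x hx => ⟨hs.trans hx.1, hx.2.trans_lt ht⟩

theorem arcsinPQ_zero (p q : ℝ) : arcsinPQ p q 0 = 0 := by
  simp [arcsinPQ]

theorem mul_integrand_le_arcsinPQ_sub {p q s t : ℝ} (hp : 0 < p) (hq : 0 < q)
    (hs : 0 ≤ s) (hst : s ≤ t) (ht : t < 1) :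
    (t - s) * (1 - s ^ q) ^ (-(1/p)) ≤ arcsinPQ p q t - arcsinPQ p q s := by
  rw [arcsinPQ, arcsinPQ, intervalIntegral.integral_interval_sub_left
    (arcsinPQ_integrand_intervalIntegrable hp hq le_rfl (hs.trans hst) ht)
    (arcsinPQ_integrand_intervalIntegrable hp hq le_rfl hs (hst.trans_lt ht))]
  have h := intervalIntegral.integral_mono_on hst
    (intervalIntegrable_const (c := (1 - s ^ q) ^ (-(1/p))))
    (arcsinPQ_integrand_intervalIntegrable hp hq hs hst ht) fun x hx =>
      arcsinPQ_integrand_monotoneOn hp hq ⟨hs, hst.trans_lt ht⟩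
        ⟨hs.trans hx.1, hx.2.trans_lt ht⟩ hx.1
  simpa using h

theorem arcsinPQ_le_mul_integrand {p q t : ℝ} (hp : 0 < p) (hq : 0 < q)
    (ht : t ∈ Ico (0:ℝ) 1) :
    arcsinPQ p q t ≤ t * (1 - t ^ q) ^ (-(1/p)) := by
  have h := intervalIntegral.integral_mono_on ht.1
    (arcsinPQ_integrand_intervalIntegrable hp hq le_rfl ht.1 ht.2)
    (intervalIntegrable_const (c := (1 - t ^ q) ^ (-(1/p)))) fun x hx =>
      arcsinPQ_integrand_monotoneOn hp hq ⟨hx.1, hx.2.trans_lt ht.2⟩ ht hx.2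
  simpa [arcsinPQ] using h

theorem arcsinPQ_strictMonoOn {p q : ℝ} (hp : 0 < p) (hq : 0 < q) :
    StrictMonoOn (arcsinPQ p q) (Ico 0 1) := by
  intro s hs t ht hst
  have h₁ := mul_integrand_le_arcsinPQ_sub hp hq hs.1 hst.le ht.2
  have h₂ := one_le_arcsinPQ_integrand hp hq hs
  nlinarith

theorem le_arcsinPQ_s18 {p q t : ℝ} (hp : 0 < p) (hq : 0 < q) (ht : t ∈ Ico (0:ℝ) 1) :
    t ≤ arcsinPQ p q t := by
  simpa [arcsinPQ_zero, zero_rpow hq.ne'] using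
    mul_integrand_le_arcsinPQ_sub hp hq le_rfl ht.1 ht.2

theorem mul_arcsinPQ_le_mul_arcsinPQ {p q s t : ℝ} (hp : 0 < p) (hq : 0 < q)
    (hs : 0 ≤ s) (hst : s ≤ t) (ht : t < 1) :
    t * arcsinPQ p q s ≤ s * arcsinPQ p q t := by
  have h₁ := mul_le_mul_of_nonneg_left (mul_integrand_le_arcsinPQ_sub hp hq hs hst ht) hs
  have h₂ := mul_le_mul_of_nonneg_left
    (arcsinPQ_le_mul_integrand hp hq ⟨hs, hst.trans_lt ht⟩) (sub_nonneg.2 hst)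
  linarith

/-- The value of the integral at `1` is either at least `1` or, in the absence of integrability,
the default `0`. -/
theorem arcsinPQ_one_notMem_Ioo {p q : ℝ} (hp : 0 < p) (hq : 0 < q) :
    arcsinPQ p q 1 ∉ Ioo (0:ℝ) 1 := by
  rintro ⟨h₀, h₁⟩
  by_cases hi : IntervalIntegrable (fun t : ℝ => (1 - t ^ q) ^ (-(1/p)))
      MeasureTheory.volume 0 1
  · have h := intervalIntegral.integral_mono_on_of_le_Ioo zero_le_one
      (intervalIntegrable_const (c := (1:ℝ))) hi fun x hx =>
        one_le_arcsinPQ_integrand hp hq ⟨hx.1.le, hx.2⟩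
    rw [arcsinPQ] at h₁
    simp only [intervalIntegral.integral_const, smul_eq_mul] at h
    linarith
  · rw [arcsinPQ, intervalIntegral.integral_undef hi] at h₀
    exact h₀.false

theorem mem_image_arcsinPQ {p q x : ℝ} (hp : 0 < p) (hq : 0 < q) (hx : x ∈ Ioo (0:ℝ) 1) :
    x ∈ arcsinPQ p q '' Icc 0 1 := by
  have hc : ContinuousOn (arcsinPQ p q) (Icc 0 x) := by
    have h := intervalIntegral.continuousOn_primitive_interval'
      (arcsinPQ_integrand_intervalIntegrable hp hq le_rfl hx.1.le hx.2) left_mem_uIcc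
    rwa [uIcc_of_le hx.1.le] at h
  have hmem : x ∈ Icc (arcsinPQ p q 0) (arcsinPQ p q x) :=
    ⟨(arcsinPQ_zero p q).le.trans hx.1.le, le_arcsinPQ_s18 hp hq ⟨hx.1.le, hx.2⟩⟩
  exact image_mono (Icc_subset_Icc_right hx.2.le) (intermediate_value_Icc hx.1.le hc hmem)

theorem arcsinPQ_sinPQ {p q x : ℝ} (hp : 0 < p) (hq : 0 < q) (hx : x ∈ Ioo (0:ℝ) 1) :
    arcsinPQ p q (sinPQ p q x) = x :=
  Function.invFunOn_eq (mem_image_arcsinPQ hp hq hx)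

theorem sinPQ_mem_Ioo {p q x : ℝ} (hp : 0 < p) (hq : 0 < q) (hx : x ∈ Ioo (0:ℝ) 1) :
    sinPQ p q x ∈ Ioo (0:ℝ) 1 := by
  have hmem : sinPQ p q x ∈ Icc (0:ℝ) 1 := Function.invFunOn_mem (mem_image_arcsinPQ hp hq hx)
  have heq := arcsinPQ_sinPQ hp hq hx
  refine ⟨hmem.1.lt_of_ne' fun h => ?_, hmem.2.lt_of_ne fun h => ?_⟩
  · rw [h, arcsinPQ_zero] at heq
    exact hx.1.ne heq
  · rw [h] at heq
    exact arcsinPQ_one_notMem_Ioo hp hq (heq ▸ hx)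

theorem sinPQ_monotoneOn {p q : ℝ} (hp : 0 < p) (hq : 0 < q) :
    MonotoneOn (sinPQ p q) (Ioo 0 1) := by
  intro x hx y hy hxy
  rw [← (arcsinPQ_strictMonoOn hp hq).le_iff_le (Ioo_subset_Ico_self (sinPQ_mem_Ioo hp hq hx))
    (Ioo_subset_Ico_self (sinPQ_mem_Ioo hp hq hy)), arcsinPQ_sinPQ hp hq hx,
    arcsinPQ_sinPQ hp hq hy]
  exact hxy

theorem sinPQ_div_self_antitoneOn {p q : ℝ} (hp : 0 < p) (hq : 0 < q) :
    AntitoneOn (fun x => sinPQ p q x / x) (Ioo 0 1) := by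
  intro x hx y hy hxy
  have h := mul_arcsinPQ_le_mul_arcsinPQ hp hq (sinPQ_mem_Ioo hp hq hx).1.le
    (sinPQ_monotoneOn hp hq hx hy hxy) (sinPQ_mem_Ioo hp hq hy).2
  rw [arcsinPQ_sinPQ hp hq hx, arcsinPQ_sinPQ hp hq hy] at h
  exact (div_le_div_iff₀ hy.1 hx.1).2 h

theorem sinPQ_aux_antitone (p q a : ℝ) (hp : 1 < p) (hq : 1 < q) (ha : 0 ≤ a) :
    AntitoneOn (fun x => (sinPQ p q x / x) ^ a * (1 - sinPQ p q x ^ q) ^ (1/p))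
      (Set.Ioo (0:ℝ) 1) := by
  have hp₀ : 0 < p := one_pos.trans hp
  have hq₀ : 0 < q := one_pos.trans hq
  intro x hx y hy hxy
  have hsx := sinPQ_mem_Ioo hp₀ hq₀ hx
  have hsy := sinPQ_mem_Ioo hp₀ hq₀ hy
  have hdiv : 0 ≤ sinPQ p q y / y := div_nonneg hsy.1.le hy.1.le
  have hcos : 0 ≤ 1 - sinPQ p q y ^ q := sub_nonneg.2 (rpow_lt_one hsy.1.le hsy.2 hq₀).le
  have hpow : sinPQ p q x ^ q ≤ sinPQ p q y ^ q :=
    rpow_le_rpow hsx.1.le (sinPQ_monotoneOn hp₀ hq₀ hx hy hxy) hq₀.le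
  exact mul_le_mul (rpow_le_rpow hdiv (sinPQ_div_self_antitoneOn hp₀ hq₀ hx hy hxy) ha)
    (rpow_le_rpow hcos (by linarith) (one_div_pos.2 hp₀).le) (rpow_nonneg hcos _)
    (rpow_nonneg (div_nonneg hsx.1.le hx.1.le) _)
end
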